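/- Let n = 6 or n ≥ 8. Then: (a) every minimal zero-sum sequence T over ZMod n with |T| ≥ ⌊n/2⌋ + 2 is zero-sum g-smooth for some g ∈ ZMod n of additive order n; and (b) there exists a minimal zero-sum sequence W over ZMod n with |W| = ⌊n/2⌋ + 1 that is not zero-sum g-smooth for any g ∈ ZMod n of additive order n. -/

import Mathlib

/-!
The heart of part (a) is the following fact: a zero-sum free sequence `S` over `ZMod n` whose set
`X` of subsums (the empty one included) has fewer than `2 |S|` elements is smooth
(`smoothBy_of_card_allSums_lt`). It is proved by induction on `|S|`. Removing a term `x` always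
destroys the subsum `σ = S.sum`.

* If every removal destroys only `σ`, then the subsums of `S` without `z` form `X ∖ {σ}` for every
  term `z`, and counting gives `(X ∖ {σ}) + z = X ∖ {0}`. For two terms `x`, `y` both `X ∖ {0}` and
  `X ∖ {σ}` are then invariant under translation by `x - y`, which forces `x = y`
  (`eq_of_drop_one`). So `S` is constant, hence smooth.
* If removing some `x` destroys at least two subsums, the induction hypothesis applies to the rest,
  whose subsums are `0, g, …, N g` with `N ≥ |S| - 1`. This progression and its translate by `x`
  are too large to be disjoint, so `x = k g` with `1 ≤ k ≤ N`, and `S` is smooth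
  (`SmoothBy.cons`).

A minimal zero-sum sequence of length at least `⌊n/2⌋ + 2` loses one term to become a zero-sum free
sequence of length greater than `n / 2`, to which the fact applies because there are at most `n`
subsums; the order of `g` exceeds `n / 2` and divides `n`, so `g` is a generator.

For part (b) the sequences are `3, -1, 2^(k-1)` when `n = 2k` and `k, (k+2)^2, 1^(k-2)` when
`n = 2k + 1`. Smoothness with respect to `g` puts `g` among the terms, and for each candidate the
coefficients of a repeated term add up to more than `n`.
-/

open Multiset

/-- `T` has no nonempty sub-multiset summing to zero. -/
def ZeroSumFree {n : ℕ} (T : Multiset (ZMod n)) : Prop :=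
  ∀ U : Multiset (ZMod n), U ≤ T → U ≠ 0 → U.sum ≠ 0

/-- `T` is nonempty, sums to zero, and no nonempty proper sub-multiset sums to zero. -/
def MinimalZeroSum {n : ℕ} (T : Multiset (ZMod n)) : Prop :=
  T ≠ 0 ∧ T.sum = 0 ∧ ∀ U : Multiset (ZMod n), U < T → U ≠ 0 → U.sum ≠ 0

/-- The set of sums of nonempty sub-multisets of `S`. -/
def subSums (S : Multiset ℕ) : Set ℕ :=
  {x | ∃ U : Multiset ℕ, U ≤ S ∧ U ≠ 0 ∧ U.sum = x}

/-- `S` is 1-smooth: Σ(S) = [1, σ(S)]. -/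
def OneSmooth (S : Multiset ℕ) : Prop :=
  subSums S = Set.Icc 1 S.sum

/-- ⌈k/n⌉ for natural numbers (n ≥ 1). -/
def nCeil (k n : ℕ) : ℕ := (k + n - 1) / n

/-- No nonempty sub-multiset `S'` of `S` has `σ(S') ≥ ⌈k/n⌉·n` and `n ∣ σ(S')`. -/
def IdempotentSumFree (k n : ℕ) (S : Multiset ℕ) : Prop :=
  ∀ S' : Multiset ℕ, S' ≤ S → S' ≠ 0 → ¬(nCeil k n * n ≤ S'.sum ∧ n ∣ S'.sum)

/-- `S` is nonempty, `σ(S) ≥ ⌈k/n⌉·n` and `n ∣ σ(S)`, and no nonempty proper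
sub-multiset has both of these properties. -/
def MinimalIdempotentSum (k n : ℕ) (S : Multiset ℕ) : Prop :=
  S ≠ 0 ∧ (nCeil k n * n ≤ S.sum ∧ n ∣ S.sum) ∧
    ∀ S' : Multiset ℕ, S' < S → S' ≠ 0 → ¬(nCeil k n * n ≤ S'.sum ∧ n ∣ S'.sum)

/-- The set of sums of nonempty sub-multisets of `T` over `ZMod n`. -/
def subSumsZ {n : ℕ} (T : Multiset (ZMod n)) : Set (ZMod n) :=
  {x | ∃ U : Multiset (ZMod n), U ≤ T ∧ U ≠ 0 ∧ U.sum = x}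

/-- `T` is (zero-sum free) `g`-smooth: `T = {n₁·g, …, n_ℓ·g}` with
`1 = n₁ ≤ ⋯ ≤ n_ℓ`, `N := n₁ + ⋯ + n_ℓ < n` and `Σ(T) = {g, 2g, …, N·g}`. -/
def GSmooth {n : ℕ} (g : ZMod n) (T : Multiset (ZMod n)) : Prop :=
  ∃ c : Multiset ℕ, T = c.map (fun m => m • g) ∧ 1 ∈ c ∧ (∀ m ∈ c, 1 ≤ m) ∧
    c.sum < n ∧ subSumsZ T = {x | ∃ j : ℕ, 1 ≤ j ∧ j ≤ c.sum ∧ x = j • g}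

/-- `T` is zero-sum `g`-smooth: `T = {n₁·g, …, n_ℓ·g}` with
`1 = n₁ ≤ ⋯ ≤ n_ℓ`, `n₁ + ⋯ + n_ℓ = n` and `Σ(T) = {g, 2g, …, n·g}`. -/
def ZeroSumGSmooth {n : ℕ} (g : ZMod n) (T : Multiset (ZMod n)) : Prop :=
  ∃ c : Multiset ℕ, T = c.map (fun m => m • g) ∧ 1 ∈ c ∧ (∀ m ∈ c, 1 ≤ m) ∧
    c.sum = n ∧ subSumsZ T = {x | ∃ j : ℕ, 1 ≤ j ∧ j ≤ n ∧ x = j • g}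

/-- For a generator `g` of `ZMod n`, the unique `t ∈ [1,n]` with `t • g = a`. -/
noncomputable def normIdx (n : ℕ) (g a : ZMod n) : ℕ :=
  if (a * Ring.inverse g).val = 0 then n else (a * Ring.inverse g).val

/-- `‖T‖_g = (n₁ + ⋯ + n_ℓ)/n` where `T = {n₁·g, …, n_ℓ·g}` with `nᵢ ∈ [1,n]`. -/
noncomputable def normg (n : ℕ) (g : ZMod n) (T : Multiset (ZMod n)) : ℚ :=
  ((T.map (normIdx n g)).sum : ℚ) / n

/-- `ind(T) = 1`: the minimum of `‖T‖_g` over generators `g` equals `1`. -/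
def HasIndexOne (n : ℕ) (T : Multiset (ZMod n)) : Prop :=
  (∃ g : ZMod n, addOrderOf g = n ∧ normg n g T = 1) ∧
  ∀ g : ZMod n, addOrderOf g = n → (1 : ℚ) ≤ normg n g T
/-! ### Subsums of zero-sum free sequences -/

/-- The finset of sums of all (possibly empty) sub-multisets of `S`. -/
def allSums {n : ℕ} (S : Multiset (ZMod n)) : Finset (ZMod n) :=
  (S.powerset.map Multiset.sum).toFinset

lemma mem_allSums {n : ℕ} {S : Multiset (ZMod n)} {x : ZMod n} :
    x ∈ allSums S ↔ ∃ U ≤ S, U.sum = x := by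
  simp [allSums]

lemma allSums_cons {n : ℕ} (x : ZMod n) (S : Multiset (ZMod n)) :
    allSums (x ::ₘ S) = allSums S ∪ (allSums S).image (fun a => a + x) := by
  ext y
  simp only [allSums, Multiset.powerset_cons, Multiset.map_add, Multiset.toFinset_add,
    Multiset.map_map, Finset.mem_union, Finset.mem_image, Multiset.mem_toFinset,
    Multiset.mem_map, Function.comp, Multiset.sum_cons]
  constructor
  · rintro (h | ⟨a, ha, rfl⟩)
    · exact Or.inl h
    · exact Or.inr ⟨a.sum, ⟨a, ha, rfl⟩, add_comm _ _⟩
  · rintro (h | ⟨_, ⟨a, ha, rfl⟩, rfl⟩)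
    · exact Or.inl h
    · exact Or.inr ⟨a, ha, add_comm _ _⟩

lemma ZeroSumFree.mono {n : ℕ} {S S' : Multiset (ZMod n)} (h : ZeroSumFree S) (hS : S' ≤ S) :
    ZeroSumFree S' :=
  fun U hU => h U (hU.trans hS)

/-- In a zero-sum free sequence `x ::ₘ S`, the inverse of `x` is not a subsum of `S`. -/
lemma ZeroSumFree.add_ne_zero {n : ℕ} {S : Multiset (ZMod n)} {x a : ZMod n}
    (h : ZeroSumFree (x ::ₘ S)) (ha : a ∈ allSums S) : a + x ≠ 0 := by
  obtain ⟨U, hU, rfl⟩ := mem_allSums.1 ha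
  have := h (x ::ₘ U) (Multiset.cons_le_cons x hU) (Multiset.cons_ne_zero)
  rwa [Multiset.sum_cons, add_comm] at this

/-- The total sum of a zero-sum free sequence is lost as a subsum when a term is removed,
since the complement of a sub-multiset attaining it would sum to zero. -/
lemma ZeroSumFree.sum_notMem {n : ℕ} {S : Multiset (ZMod n)} {x : ZMod n}
    (h : ZeroSumFree (x ::ₘ S)) : (x ::ₘ S).sum ∉ allSums S := by
  intro hm
  obtain ⟨U, hU, hs⟩ := mem_allSums.1 hm
  obtain ⟨V, rfl⟩ := Multiset.le_iff_exists_add.1 hU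
  refine h (x ::ₘ V) (Multiset.cons_le_cons x (Multiset.le_add_left V U))
    (Multiset.cons_ne_zero) ?_
  simp only [Multiset.sum_cons, Multiset.sum_add] at hs ⊢
  linear_combination -hs

/-! ### Zero-sum free sequences with few subsums -/

/-- `S = {m • g : m ∈ c}` with positive integers `m`, one of them `1`, of total less than the
order of `g`, and every multiple `j • g` with `j ≤ c.sum` is a subsum. -/
def SmoothBy {n : ℕ} (g : ZMod n) (c : Multiset ℕ) (S : Multiset (ZMod n)) : Prop :=
  S = c.map (fun m => m • g) ∧ 1 ∈ c ∧ (∀ m ∈ c, 1 ≤ m) ∧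
    (∀ j, 1 ≤ j → j ≤ c.sum → j • g ≠ 0) ∧ ∀ j ≤ c.sum, j • g ∈ allSums S

lemma card_le_sum_of_pos {c : Multiset ℕ} (h : ∀ m ∈ c, 1 ≤ m) : Multiset.card c ≤ c.sum := by
  simpa using Multiset.card_nsmul_le_sum h

/-- If removing any one term costs only one subsum, all terms are equal: the set `X` of subsums
satisfies `(X ∖ {σ}) + z = X ∖ {0}` for every term `z`, where `σ` is the total sum. -/
lemma eq_of_drop_one {n : ℕ} {S : Multiset (ZMod n)} (hS : ZeroSumFree S)
    (h : ∀ x ∈ S, (allSums S).card ≤ (allSums (S.erase x)).card + 1) :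
    ∀ x ∈ S, ∀ y ∈ S, x = y := by
  have key : ∀ z ∈ S, ((allSums S).erase S.sum).image (fun a => a + z) = (allSums S).erase 0 := by
    intro z hz
    have hd := h z hz
    obtain ⟨R, rfl⟩ := Multiset.exists_cons_of_mem hz
    rw [Multiset.erase_cons_head] at hd
    have hsub : allSums R ⊆ allSums (z ::ₘ R) := by
      rw [allSums_cons]; exact Finset.subset_union_left
    have hmem : (z ::ₘ R).sum ∈ allSums (z ::ₘ R) := mem_allSums.2 ⟨_, le_rfl, rfl⟩
    have h0 : (0 : ZMod n) ∈ allSums (z ::ₘ R) := mem_allSums.2 ⟨0, Multiset.zero_le _, rfl⟩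
    have hR : (allSums (z ::ₘ R)).erase (z ::ₘ R).sum = allSums R := by
      refine (Finset.eq_of_subset_of_card_le ?_ ?_).symm
      · intro a ha
        refine Finset.mem_erase.2 ⟨?_, hsub ha⟩
        rintro rfl
        exact hS.sum_notMem ha
      · rw [Finset.card_erase_of_mem hmem]; omega
    rw [hR]
    refine Finset.eq_of_subset_of_card_le ?_ ?_
    · intro a ha
      refine Finset.mem_erase.2 ⟨?_, ?_⟩
      · obtain ⟨b, hb, rfl⟩ := Finset.mem_image.1 ha
        exact hS.add_ne_zero hb
      · rw [allSums_cons]; exact Finset.mem_union_right _ ha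
    · rw [Finset.card_erase_of_mem h0, Finset.card_image_of_injective _ (add_left_injective z)]
      omega
  intro x hx y hy
  have hσ : S.sum ∈ (allSums S).erase 0 := by
    refine Finset.mem_erase.2 ⟨hS S le_rfl ?_, mem_allSums.2 ⟨_, le_rfl, rfl⟩⟩
    rintro rfl
    simp at hx
  -- Translation by `y - x` preserves `X ∖ {0}`, and translation by `x - y` preserves `X ∖ {σ}`.
  rw [← key x hx] at hσ
  obtain ⟨p, hp, hpx⟩ := Finset.mem_image.1 hσ
  have hq : p + y ∈ (allSums S).erase 0 := by
    rw [← key y hy]; exact Finset.mem_image_of_mem _ hp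
  by_contra hxy
  have hq' : p + y ∈ (allSums S).erase S.sum := by
    refine Finset.mem_erase.2 ⟨fun he => hxy ?_, Finset.mem_of_mem_erase hq⟩
    exact add_left_cancel (hpx.trans he.symm)
  have hr : p + y + x ∈ (allSums S).erase 0 := by
    rw [← key x hx]; exact Finset.mem_image_of_mem _ hq'
  rw [← key y hy] at hr
  obtain ⟨r, hr, hry⟩ := Finset.mem_image.1 hr
  refine (Finset.mem_erase.1 hr).1 ?_
  linear_combination hry + hpx

/-- Adding a term to a smooth sequence preserves smoothness as long as the number of subsums
stays below twice the length: the two progressions `[0, N] g` and `[0, N] g + x` must meet. -/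
lemma SmoothBy.cons {n : ℕ} {g x : ZMod n} {c : Multiset ℕ} {S : Multiset (ZMod n)}
    (h : SmoothBy g c S) (hS : ZeroSumFree (x ::ₘ S))
    (hcard : (allSums (x ::ₘ S)).card ≤ 2 * Multiset.card S + 1) :
    ∃ k, SmoothBy g (k ::ₘ c) (x ::ₘ S) := by
  obtain ⟨hSc, h1, hpos, hord, hall⟩ := h
  have hlen : Multiset.card S ≤ c.sum := by
    rw [hSc, Multiset.card_map]; exact card_le_sum_of_pos hpos
  let A := (Finset.range (c.sum + 1)).image (fun j => j • g)
  have hinj : A.card = c.sum + 1 := by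
    rw [Finset.card_image_of_injOn, Finset.card_range]
    have aux : ∀ i j, i < j → j ≤ c.sum → i • g ≠ j • g := by
      intro i j hij hj he
      refine hord (j - i) (by omega) (by omega) ?_
      rw [sub_nsmul _ hij.le, he]; abel
    intro i hi j hj he
    simp only [Finset.coe_range, Set.mem_Iio] at hi hj
    rcases lt_trichotomy i j with hij | hij | hij
    · exact absurd he (aux i j hij (by omega))
    · exact hij
    · exact absurd he.symm (aux j i hij (by omega))
  have hA : A ⊆ allSums S := by
    intro a ha
    obtain ⟨j, hj, rfl⟩ := Finset.mem_image.1 ha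
    exact hall j (by have := Finset.mem_range.1 hj; omega)
  have hnd : ¬ Disjoint A (A.image (fun a => a + x)) := by
    intro hd
    have h2 : (A ∪ A.image (fun a => a + x)).card ≤ (allSums (x ::ₘ S)).card := by
      rw [allSums_cons]
      exact Finset.card_le_card (Finset.union_subset_union hA (Finset.image_subset_image hA))
    rw [Finset.card_union_of_disjoint hd,
      Finset.card_image_of_injective _ (add_left_injective x)] at h2
    omega
  obtain ⟨a, ha, ha'⟩ := Finset.not_disjoint_iff.1 hnd
  obtain ⟨b, hb, hba⟩ := Finset.mem_image.1 ha'
  obtain ⟨i, hi, rfl⟩ := Finset.mem_image.1 ha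
  obtain ⟨j, hj, rfl⟩ := Finset.mem_image.1 hb
  rw [Finset.mem_range] at hi hj
  have hji : j < i := by
    by_contra hle
    refine hS.add_ne_zero (hall (j - i) (by omega)) ?_
    rw [sub_nsmul _ (by omega : i ≤ j)]
    linear_combination hba
  have hx : x = (i - j) • g := by
    rw [sub_nsmul _ hji.le]; linear_combination hba
  refine ⟨i - j, ?_, Multiset.mem_cons_of_mem h1, ?_, ?_, ?_⟩
  · rw [Multiset.map_cons, ← hSc, ← hx]
  · intro m hm
    rcases Multiset.mem_cons.1 hm with rfl | hm
    · omega
    · exact hpos m hm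
  · intro t ht1 ht
    rw [Multiset.sum_cons] at ht
    by_cases htc : t ≤ c.sum
    · exact hord t ht1 htc
    · have := hS.add_ne_zero (hall (t - (i - j)) (by omega))
      rwa [hx, ← add_nsmul, Nat.sub_add_cancel (by omega)] at this
  · intro t ht
    rw [Multiset.sum_cons] at ht
    rw [allSums_cons]
    by_cases htc : t ≤ c.sum
    · exact Finset.mem_union_left _ (hall t htc)
    · refine Finset.mem_union_right _
        (Finset.mem_image.2 ⟨(t - (i - j)) • g, hall _ (by omega), ?_⟩)
      rw [hx, ← add_nsmul, Nat.sub_add_cancel (by omega)]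

lemma smoothBy_replicate {n : ℕ} {g : ZMod n} {l : ℕ} (hl : 1 ≤ l)
    (hS : ZeroSumFree (Multiset.replicate l g)) :
    SmoothBy g (Multiset.replicate l 1) (Multiset.replicate l g) := by
  refine ⟨by simp, Multiset.mem_replicate.2 ⟨by omega, rfl⟩, ?_, ?_, ?_⟩
  · intro m hm
    exact (Multiset.eq_of_mem_replicate hm).ge
  · intro j hj1 hj
    rw [Multiset.sum_replicate, smul_eq_mul, mul_one] at hj
    have := hS (Multiset.replicate j g) ((Multiset.replicate_le_replicate g).2 hj)
      (by intro h0; have := congrArg Multiset.card h0; simp at this; omega)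
    rwa [Multiset.sum_replicate] at this
  · intro j hj
    rw [Multiset.sum_replicate, smul_eq_mul, mul_one] at hj
    exact mem_allSums.2 ⟨Multiset.replicate j g, (Multiset.replicate_le_replicate g).2 hj,
      Multiset.sum_replicate _ _⟩

/-- A zero-sum free sequence with fewer than twice as many subsums (the empty one included)
as terms is smooth. -/
theorem smoothBy_of_card_allSums_lt {n : ℕ} (l : ℕ) : ∀ S : Multiset (ZMod n),
    Multiset.card S = l → ZeroSumFree S → (allSums S).card + 1 ≤ 2 * Multiset.card S →
      ∃ g c, SmoothBy g c S := by
  induction l with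
  | zero =>
    intro S hl _ hc
    omega
  | succ l ih =>
    intro S hl hS hc
    by_cases h : ∀ x ∈ S, (allSums S).card ≤ (allSums (S.erase x)).card + 1
    · have heq := eq_of_drop_one hS h
      obtain ⟨x, hx⟩ := Multiset.card_pos_iff_exists_mem.1 (by omega : 0 < Multiset.card S)
      have hrep : S = Multiset.replicate (Multiset.card S) x :=
        Multiset.eq_replicate_card.2 fun y hy => heq y hy x hx
      rw [hrep] at hS ⊢
      exact ⟨x, _, smoothBy_replicate (by omega) hS⟩
    · push Not at h
      obtain ⟨x, hx, hlt⟩ := h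
      obtain ⟨R, rfl⟩ := Multiset.exists_cons_of_mem hx
      rw [Multiset.erase_cons_head] at hlt
      rw [Multiset.card_cons] at hl hc
      obtain ⟨g, c, hgc⟩ := ih R (by omega) (hS.mono (Multiset.le_cons_self R x)) (by omega)
      obtain ⟨k, hk⟩ := hgc.cons hS (by omega)
      exact ⟨g, _, hk⟩

/-! ### Long minimal zero-sum sequences -/

/-- Long minimal zero-sum sequences are smooth. -/
lemma zeroSumGSmooth_of_long {n : ℕ} (hn : 0 < n) {T : Multiset (ZMod n)}
    (hT : MinimalZeroSum T) (hcard : n / 2 + 2 ≤ Multiset.card T) :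
    ∃ g : ZMod n, addOrderOf g = n ∧ ZeroSumGSmooth g T := by
  have : NeZero n := ⟨hn.ne'⟩
  obtain ⟨hT0, hsum, hmin⟩ := hT
  obtain ⟨x, hx⟩ := Multiset.exists_mem_of_ne_zero hT0
  obtain ⟨S, rfl⟩ := Multiset.exists_cons_of_mem hx
  rw [Multiset.card_cons] at hcard
  have hS : ZeroSumFree S := fun U hU => hmin U (hU.trans_lt (Multiset.lt_cons_self S x))
  have hle : (allSums S).card ≤ n := by
    simpa [ZMod.card] using Finset.card_le_univ (allSums S)
  obtain ⟨g, c, hSc, h1, hpos, hord, hall⟩ :=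
    smoothBy_of_card_allSums_lt _ S rfl hS (by omega)
  have hlen : Multiset.card S ≤ c.sum := by
    rw [hSc, Multiset.card_map]; exact card_le_sum_of_pos hpos
  have hng : n • g = 0 := by simp
  have hdvd : addOrderOf g ∣ n := addOrderOf_dvd_of_nsmul_eq_zero hng
  have hopos : 0 < addOrderOf g := Nat.pos_of_dvd_of_pos hdvd hn
  have hlt : c.sum < addOrderOf g := by
    by_contra hc
    exact hord _ hopos (by omega) (addOrderOf_nsmul_eq_zero g)
  -- The order of `g` divides `n` and exceeds `n / 2`.
  have hog : addOrderOf g = n := by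
    obtain ⟨q, hq⟩ := hdvd
    have hq2 : q < 2 := by
      by_contra h2
      have : addOrderOf g * 2 ≤ addOrderOf g * q := Nat.mul_le_mul_left _ (by omega)
      omega
    have : q = 1 := by
      interval_cases q <;> omega
    rw [this, mul_one] at hq
    exact hq.symm
  have hsumS : S.sum = c.sum • g := by
    rw [hSc]
    clear * -
    induction c using Multiset.induction with
    | empty => simp
    | cons a c ih => rw [Multiset.map_cons, Multiset.sum_cons, ih, Multiset.sum_cons, add_nsmul]
  have hxg : x = (n - c.sum) • g := by
    rw [Multiset.sum_cons] at hsum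
    rw [sub_nsmul _ (by omega), hng]
    linear_combination hsum - hsumS
  refine ⟨g, hog, (n - c.sum) ::ₘ c, ?_, Multiset.mem_cons_of_mem h1, ?_, ?_, ?_⟩
  · rw [Multiset.map_cons, ← hSc, ← hxg]
  · intro m hm
    rcases Multiset.mem_cons.1 hm with rfl | hm
    · omega
    · exact hpos m hm
  · rw [Multiset.sum_cons]; omega
  · ext y
    constructor
    · intro _
      -- Every element of the group is a multiple of the generator `g`.
      have hy : y ∈ AddSubgroup.zmultiples g := by
        rw [AddSubgroup.eq_top_of_card_eq (AddSubgroup.zmultiples g)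
          (by rw [Nat.card_zmultiples, hog, Nat.card_zmod])]
        trivial
      rw [mem_zmultiples_iff_mem_range_addOrderOf, hog] at hy
      obtain ⟨j, hj, rfl⟩ := Finset.mem_image.1 hy
      rw [Finset.mem_range] at hj
      rcases Nat.eq_zero_or_pos j with rfl | hj0
      · exact ⟨n, hn, le_rfl, by rw [hng, zero_nsmul]⟩
      · exact ⟨j, hj0, hj.le, rfl⟩
    · rintro ⟨j, hj1, hj, rfl⟩
      by_cases hjn : j = n
      · exact ⟨x ::ₘ S, le_rfl, Multiset.cons_ne_zero, by rw [hsum, hjn, hng]⟩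
      have hne : j • g ≠ 0 := by
        intro h0
        have := Nat.le_of_dvd hj1 (addOrderOf_dvd_of_nsmul_eq_zero h0)
        omega
      have hm : j • g ∈ allSums (x ::ₘ S) := by
        rw [allSums_cons]
        by_cases hjc : j ≤ c.sum
        · exact Finset.mem_union_left _ (hall j hjc)
        · refine Finset.mem_union_right _
            (Finset.mem_image.2 ⟨(j - (n - c.sum)) • g, hall _ (by omega), ?_⟩)
          rw [hxg, ← add_nsmul, Nat.sub_add_cancel (by omega)]
      obtain ⟨U, hU, hUs⟩ := mem_allSums.1 hm
      refine ⟨U, hU, ?_, hUs⟩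
      rintro rfl
      exact hne (by simpa using hUs.symm)

/-! ### Non-smooth sequences of length `⌊n/2⌋ + 1` -/

lemma le_cons_cases {α : Type*} {a : α} {B U : Multiset α} (h : U ≤ a ::ₘ B) :
    U ≤ B ∨ ∃ V ≤ B, U = a ::ₘ V := by
  rw [← Multiset.mem_powerset, Multiset.powerset_cons, Multiset.mem_add, Multiset.mem_map] at h
  rcases h with h | ⟨V, hV, rfl⟩
  · exact Or.inl (Multiset.mem_powerset.1 h)
  · exact Or.inr ⟨V, Multiset.mem_powerset.1 hV, rfl⟩

/-- A congruence modulo `n` between naturals below `3 * n`, in a form free of products of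
variables. -/
lemma eq_of_natCast_eq {n a b : ℕ} (h : (a : ZMod n) = (b : ZMod n)) (ha : a < 3 * n)
    (hb : b < 3 * n) :
    a = b ∨ a = b + n ∨ a = b + 2 * n ∨ b = a + n ∨ b = a + 2 * n := by
  have aux : ∀ x y : ℕ, x ≤ y → y < 3 * n → x ≡ y [MOD n] →
      y = x ∨ y = x + n ∨ y = x + 2 * n := by
    intro x y hxy hy hm
    obtain ⟨q, hq⟩ := (Nat.modEq_iff_dvd' hxy).1 hm
    have hq3 : q < 3 := by
      by_contra hc
      have : n * 3 ≤ n * q := Nat.mul_le_mul_left _ (by omega)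
      omega
    interval_cases q <;> omega
  rw [ZMod.natCast_eq_natCast_iff] at h
  rcases le_total a b with hab | hab
  · have := aux a b hab hb h
    omega
  · have := aux b a hab ha h.symm
    omega

lemma eq_of_nsmul_natCast_eq {n m a b : ℕ} (h : m • (a : ZMod n) = (b : ZMod n))
    (ha : m * a < 3 * n) (hb : b < 3 * n) :
    m * a = b ∨ m * a = b + n ∨ m * a = b + 2 * n ∨ b = m * a + n ∨ b = m * a + 2 * n :=
  eq_of_natCast_eq (by rw [Nat.cast_mul, ← nsmul_eq_mul]; exact h) ha hb

/-- If every coefficient representing the element `a` is at least `L`, the occurrences of `a`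
alone force the coefficients to have a large sum. -/
lemma mul_count_le_sum {n L : ℕ} {g a : ZMod n} {c : Multiset ℕ}
    (h : ∀ m ∈ c, m • g = a → L ≤ m) :
    (c.map (fun m => m • g)).count a * L ≤ c.sum := by
  induction c using Multiset.induction with
  | empty => simp
  | cons m c ih =>
    have ih' := ih fun m' hm' => h m' (Multiset.mem_cons_of_mem hm')
    rw [Multiset.map_cons, Multiset.count_cons, Multiset.sum_cons, add_mul]
    split_ifs with hm
    · have := h m (Multiset.mem_cons_self _ _) hm.symm
      omega
    · omega

/-- The bound refuting smoothness: each of `r` occurrences of `b` would need a coefficient at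
least `L` with respect to `g`, although `r * L > n`. -/
lemma not_zeroSumGSmooth {n L r : ℕ} {g b : ZMod n} {W : Multiset (ZMod n)}
    (hr : Multiset.replicate r b ≤ W) (hL : n < r * L)
    (h : ∀ m, 1 ≤ m → m < L → m • g ≠ b) : ¬ ZeroSumGSmooth g W := by
  rintro ⟨c, rfl, -, hpos, hsum, -⟩
  have h1 := mul_count_le_sum (g := g) (a := b) (L := L) (c := c) fun m hm he => by
    by_contra hlt
    exact h m (hpos m hm) (by omega) he
  have h2 := Nat.mul_le_mul_right L (Multiset.le_count_iff_replicate_le.2 hr)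
  omega

lemma ZeroSumGSmooth.mem {n : ℕ} {g : ZMod n} {W : Multiset (ZMod n)}
    (h : ZeroSumGSmooth g W) : g ∈ W := by
  obtain ⟨c, rfl, h1, -⟩ := h
  exact Multiset.mem_map.2 ⟨1, h1, one_nsmul g⟩

/-- For `n = 2k`, the sequence `3, -1, 2, …, 2` with `k - 1` twos. -/
def evenW (k : ℕ) : Multiset (ZMod (2 * k)) :=
  ((3 : ℕ) : ZMod (2 * k)) ::ₘ ((2 * k - 1 : ℕ) : ZMod (2 * k)) ::ₘ
    Multiset.replicate (k - 1) ((2 : ℕ) : ZMod (2 * k))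

lemma evenW_minimal {k : ℕ} (hk : 3 ≤ k) : MinimalZeroSum (evenW k) := by
  have key : ∀ (U : Multiset (ZMod (2 * k))) (v : ℕ), U.sum = 0 → U.sum = (v : ZMod (2 * k)) →
      v < 3 * (2 * k) → v = 0 ∨ v = 2 * k ∨ v = 2 * (2 * k) := by
    intro U v h0 hv hlt
    have := eq_of_natCast_eq (n := 2 * k) (a := v) (b := 0) (by rw [← hv, h0, Nat.cast_zero])
      hlt (by omega)
    omega
  refine ⟨Multiset.cons_ne_zero, ?_, ?_⟩
  · have : (evenW k).sum = ((2 * (2 * k) : ℕ) : ZMod (2 * k)) := by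
      rw [show 2 * (2 * k) = 3 + ((2 * k - 1) + (k - 1) * 2) by omega]
      simp only [evenW, Multiset.sum_cons, Multiset.sum_replicate, nsmul_eq_mul, Nat.cast_add,
        Nat.cast_mul]
    rw [this, Nat.cast_mul, ZMod.natCast_self, mul_zero]
  · intro U hU hne hsum
    have hmain : U = 0 ∨ U = evenW k := by
      -- Only the empty choice and the full choice of terms have a sum divisible by `2 * k`.
      rcases le_cons_cases hU.le with h | ⟨V, h, rfl⟩ <;>
      rcases le_cons_cases h with h₂ | ⟨V', h₂, rfl⟩ <;>
      obtain ⟨i, hi, rfl⟩ := Multiset.le_replicate_iff.1 h₂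
      · have := key _ (i * 2) hsum (by simp [Multiset.sum_replicate]) (by omega)
        left
        rw [show i = 0 by omega, Multiset.replicate_zero]
      · have := key _ ((2 * k - 1) + i * 2) hsum
          (by simp only [Multiset.sum_cons, Multiset.sum_replicate, nsmul_eq_mul, Nat.cast_add,
                Nat.cast_mul]) (by omega)
        omega
      · have := key _ (3 + i * 2) hsum
          (by simp only [Multiset.sum_cons, Multiset.sum_replicate, nsmul_eq_mul, Nat.cast_add,
                Nat.cast_mul]) (by omega)
        omega
      · have := key _ (3 + ((2 * k - 1) + i * 2)) hsum
          (by simp only [Multiset.sum_cons, Multiset.sum_replicate, nsmul_eq_mul, Nat.cast_add,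
                Nat.cast_mul]) (by omega)
        right
        rw [show i = k - 1 by omega, evenW]
    rcases hmain with h | h
    · exact hne h
    · exact hU.ne h

lemma evenW_not_smooth {k : ℕ} (hk : 3 ≤ k) (g : ZMod (2 * k)) (hg : addOrderOf g = 2 * k) :
    ¬ ZeroSumGSmooth g (evenW k) := by
  intro hs
  have hrep : Multiset.replicate (k - 1) ((2 : ℕ) : ZMod (2 * k)) ≤ evenW k :=
    (Multiset.le_cons_self _ _).trans (Multiset.le_cons_self _ _)
  have hmem := hs.mem
  simp only [evenW, Multiset.mem_cons, Multiset.mem_replicate] at hmem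
  rcases hmem with rfl | rfl | ⟨-, rfl⟩
  · refine not_zeroSumGSmooth (L := 4) hrep (by omega) (fun m h1 h4 he => ?_) hs
    have := eq_of_nsmul_natCast_eq he (by omega) (by omega)
    omega
  · refine not_zeroSumGSmooth (L := 4) hrep (by omega) (fun m h1 h4 he => ?_) hs
    interval_cases m <;>
    · have := eq_of_nsmul_natCast_eq he (by omega) (by omega)
      omega
  · -- `2` does not generate `ZMod (2 * k)`.
    have h0 : k • ((2 : ℕ) : ZMod (2 * k)) = 0 := by
      rw [nsmul_eq_mul, ← Nat.cast_mul, mul_comm, ZMod.natCast_self]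
    have := Nat.le_of_dvd (by omega) (addOrderOf_dvd_of_nsmul_eq_zero h0)
    omega

/-- For `n = 2k + 1`, the sequence `k, k + 2, k + 2, 1, …, 1` with `k - 2` ones. -/
def oddW (k : ℕ) : Multiset (ZMod (2 * k + 1)) :=
  ((k : ℕ) : ZMod (2 * k + 1)) ::ₘ ((k + 2 : ℕ) : ZMod (2 * k + 1)) ::ₘ
    ((k + 2 : ℕ) : ZMod (2 * k + 1)) ::ₘ
    Multiset.replicate (k - 2) ((1 : ℕ) : ZMod (2 * k + 1))

lemma oddW_minimal {k : ℕ} (hk : 4 ≤ k) : MinimalZeroSum (oddW k) := by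
  have key : ∀ (U : Multiset (ZMod (2 * k + 1))) (v : ℕ), U.sum = 0 →
      U.sum = (v : ZMod (2 * k + 1)) →
      v < 3 * (2 * k + 1) → v = 0 ∨ v = 2 * k + 1 ∨ v = 2 * (2 * k + 1) := by
    intro U v h0 hv hlt
    have := eq_of_natCast_eq (n := 2 * k + 1) (a := v) (b := 0)
      (by rw [← hv, h0, Nat.cast_zero]) hlt (by omega)
    omega
  have hcast : ∀ i : ℕ, (Multiset.replicate i ((1 : ℕ) : ZMod (2 * k + 1))).sum = (i : ℕ) := by
    intro i
    simp [Multiset.sum_replicate]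
  refine ⟨Multiset.cons_ne_zero, ?_, ?_⟩
  · have : (oddW k).sum = ((2 * (2 * k + 1) : ℕ) : ZMod (2 * k + 1)) := by
      rw [show 2 * (2 * k + 1) = k + ((k + 2) + ((k + 2) + (k - 2))) by omega]
      simp only [oddW, Multiset.sum_cons, hcast, Nat.cast_add]
    rw [this, Nat.cast_mul, ZMod.natCast_self, mul_zero]
  · intro U hU hne hsum
    have hmain : U = 0 ∨ U = oddW k := by
      -- Only the empty choice and the full choice of terms have a sum divisible by `2 * k + 1`.
      rcases le_cons_cases hU.le with h | ⟨V, h, rfl⟩ <;>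
      rcases le_cons_cases h with h₂ | ⟨V', h₂, rfl⟩ <;>
      rcases le_cons_cases h₂ with h₃ | ⟨V'', h₃, rfl⟩ <;>
      obtain ⟨i, hi, rfl⟩ := Multiset.le_replicate_iff.1 h₃
      · have := key _ i hsum (hcast i) (by omega)
        left
        rw [show i = 0 by omega, Multiset.replicate_zero]
      · have := key _ ((k + 2) + i) hsum
          (by simp only [Multiset.sum_cons, hcast, Nat.cast_add]) (by omega)
        omega
      · have := key _ ((k + 2) + i) hsum
          (by simp only [Multiset.sum_cons, hcast, Nat.cast_add]) (by omega)
        omega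
      · have := key _ ((k + 2) + ((k + 2) + i)) hsum
          (by simp only [Multiset.sum_cons, hcast, Nat.cast_add]) (by omega)
        omega
      · have := key _ (k + i) hsum
          (by simp only [Multiset.sum_cons, hcast, Nat.cast_add]) (by omega)
        omega
      · have := key _ (k + ((k + 2) + i)) hsum
          (by simp only [Multiset.sum_cons, hcast, Nat.cast_add]) (by omega)
        omega
      · have := key _ (k + ((k + 2) + i)) hsum
          (by simp only [Multiset.sum_cons, hcast, Nat.cast_add]) (by omega)
        omega
      · have := key _ (k + ((k + 2) + ((k + 2) + i))) hsum
          (by simp only [Multiset.sum_cons, hcast, Nat.cast_add]) (by omega)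
        right
        rw [show i = k - 2 by omega, oddW]
    rcases hmain with h | h
    · exact hne h
    · exact hU.ne h

lemma oddW_not_smooth {k : ℕ} (hk : 4 ≤ k) (g : ZMod (2 * k + 1)) :
    ¬ ZeroSumGSmooth g (oddW k) := by
  intro hs
  have hrep : Multiset.replicate (k - 2) ((1 : ℕ) : ZMod (2 * k + 1)) ≤ oddW k :=
    ((Multiset.le_cons_self _ _).trans (Multiset.le_cons_self _ _)).trans
      (Multiset.le_cons_self _ _)
  have hrep2 : Multiset.replicate 2 ((k + 2 : ℕ) : ZMod (2 * k + 1)) ≤ oddW k :=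
    (Multiset.cons_le_cons _ (Multiset.cons_le_cons _ (Multiset.zero_le _))).trans
      (Multiset.le_cons_self _ _)
  have hmem := hs.mem
  simp only [oddW, Multiset.mem_cons, Multiset.mem_replicate] at hmem
  rcases hmem with rfl | rfl | rfl | ⟨-, rfl⟩
  · refine not_zeroSumGSmooth (L := 5) hrep (by omega) (fun m h1 h5 he => ?_) hs
    interval_cases m <;>
    · have := eq_of_nsmul_natCast_eq he (by omega) (by omega)
      omega
  · refine not_zeroSumGSmooth (L := 5) hrep (by omega) (fun m h1 h5 he => ?_) hs
    interval_cases m <;>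
    · have := eq_of_nsmul_natCast_eq he (by omega) (by omega)
      omega
  · refine not_zeroSumGSmooth (L := 5) hrep (by omega) (fun m h1 h5 he => ?_) hs
    interval_cases m <;>
    · have := eq_of_nsmul_natCast_eq he (by omega) (by omega)
      omega
  · -- With `g = 1` the two terms `k + 2` alone already exceed `2 * k + 1`.
    refine not_zeroSumGSmooth (L := k + 2) hrep2 (by omega) (fun m h1 hm he => ?_) hs
    have := eq_of_nsmul_natCast_eq he (by omega) (by omega)
    omega

theorem smo_large_n (n : ℕ) (hn : n = 6 ∨ 8 ≤ n) :
    (∀ T : Multiset (ZMod n), MinimalZeroSum T → n / 2 + 2 ≤ Multiset.card T →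
      ∃ g : ZMod n, addOrderOf g = n ∧ ZeroSumGSmooth g T) ∧
    (∃ W : Multiset (ZMod n), MinimalZeroSum W ∧ Multiset.card W = n / 2 + 1 ∧
      ∀ g : ZMod n, addOrderOf g = n → ¬ ZeroSumGSmooth g W) := by
  refine ⟨fun T hT hc => zeroSumGSmooth_of_long (by omega) hT hc, ?_⟩
  rcases Nat.even_or_odd' n with ⟨k, rfl | rfl⟩
  · refine ⟨evenW k, evenW_minimal (by omega), ?_, evenW_not_smooth (by omega)⟩
    simp only [evenW, Multiset.card_cons, Multiset.card_replicate]
    omega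
  · refine ⟨oddW k, oddW_minimal (by omega), ?_, fun g _ => oddW_not_smooth (by omega) g⟩
    simp only [oddW, Multiset.card_cons, Multiset.card_replicate]
    omega
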